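/- For every integer d ≥ 1, every natural number k, and every real m ∈ [0, 1], it holds that 0 ≤ 1 − g_d^{(k)}(m) ≤ (1 − m)^{(p_d)^k}, where the exponentiation is the real power with exponent (p_d)^k. -/

import Mathlib

noncomputable def g (d : ℕ) : ℝ → ℝ :=
  fun m => ∑ i ∈ Finset.range (d + 1),
    (1 / 4 ^ i : ℝ) * (Nat.choose (2 * i) i) * (m * (1 - m ^ 2) ^ i)

noncomputable def p (d : ℕ) : ℝ :=
  ∑ i ∈ Finset.range (d + 1), (1 / 4 ^ i : ℝ) * (Nat.choose (2 * i) i)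

/-!
The derivative of `g d` telescopes to `p d * (1 - x ^ 2) ^ d`. Hence `f x = g d x + (1 - x) ^ p d`
has `f 0 = f 1 = 1`, and on `(0, 1)` its derivative has the sign of
`φ x = d * log (1 + x) + (d + 1 - p d) * log (1 - x)`. As `p d ≤ d + 1`, the function `φ` is concave
with `φ 0 = 0`, so it changes sign at most once, from positive to negative. So `f` first increases
and then decreases, whence `1 ≤ f` on `[0, 1]`. This is the case `k = 1`, which then iterates.
-/

open Set Real

lemma min_le_of_hasDerivAt_of_sign_change {f f' : ℝ → ℝ} {a b m : ℝ}
    (hf : ContinuousOn f (Icc a b)) (hf' : ∀ x ∈ Ioo a b, HasDerivAt f (f' x) x)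
    (hsign : ∀ x ∈ Ioo a b, ∀ y ∈ Ioo a b, x < y → 0 < f' y → 0 ≤ f' x)
    (hm : m ∈ Icc a b) : min (f a) (f b) ≤ f m := by
  by_contra! hlt
  obtain ⟨hfa, hfb⟩ := lt_min_iff.1 hlt
  have ham : a < m := hm.1.lt_of_ne (by rintro rfl; exact hfa.false)
  have hmb : m < b := hm.2.lt_of_ne (by rintro rfl; exact hfb.false)
  obtain ⟨x, hx, hfx⟩ := exists_hasDerivAt_eq_slope f f' ham
    (hf.mono (Icc_subset_Icc_right hm.2)) fun t ht => hf' t ⟨ht.1, ht.2.trans hmb⟩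
  obtain ⟨y, hy, hfy⟩ := exists_hasDerivAt_eq_slope f f' hmb
    (hf.mono (Icc_subset_Icc_left hm.1)) fun t ht => hf' t ⟨ham.trans ht.1, ht.2⟩
  have hx_neg : f' x < 0 := hfx ▸ div_neg_of_neg_of_pos (sub_neg.2 hfa) (sub_pos.2 ham)
  have hy_pos : 0 < f' y := hfy ▸ div_pos (sub_pos.2 hfb) (sub_pos.2 hmb)
  exact hx_neg.not_ge <| hsign x ⟨hx.1, hx.2.trans hmb⟩ y ⟨ham.trans hy.1, hy.2⟩
    (hx.2.trans hy.1) hy_pos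

lemma concaveOn_log_one_add_mul (c : ℝ) :
    ConcaveOn ℝ {x | 0 < 1 + c * x} fun x => log (1 + c * x) :=
  (strictConcaveOn_log_Ioi.concaveOn.translate_right 1).comp_linearMap (LinearMap.mulLeft ℝ c)

lemma concaveOn_mul_log_one_add_add_mul_log_one_sub {a b : ℝ} (ha : 0 ≤ a) (hb : 0 ≤ b) :
    ConcaveOn ℝ (Ioo (-1) 1) fun x => a * log (1 + x) + b * log (1 - x) := by
  have hadd : ConcaveOn ℝ (Ioo (-1) 1) fun x : ℝ => log (1 + x) := by
    simpa only [one_mul] using (concaveOn_log_one_add_mul 1).subset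
      (fun x hx => show 0 < 1 + 1 * x by linarith [hx.1])
      (convex_Ioo (-1) 1)
  have hsub : ConcaveOn ℝ (Ioo (-1) 1) fun x : ℝ => log (1 - x) := by
    simpa only [neg_one_mul, ← sub_eq_add_neg] using (concaveOn_log_one_add_mul (-1)).subset
      (fun x hx => show 0 < 1 + -1 * x by linarith [hx.2])
      (convex_Ioo (-1) 1)
  exact (hadd.smul ha).add (hsub.smul hb)

lemma one_sub_rpow_le_one_sub_sq_pow_iff {x : ℝ} (hx : x ∈ Ioo (-1) 1) (q : ℝ) (n : ℕ) :
    (1 - x) ^ q ≤ (1 - x ^ 2) ^ n ↔ 0 ≤ n * log (1 + x) + (n - q) * log (1 - x) := by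
  have hadd : 0 < 1 + x := by linarith [hx.1]
  have hsub : 0 < 1 - x := by linarith [hx.2]
  have hfactor : 1 - x ^ 2 = (1 + x) * (1 - x) := by ring
  rw [hfactor, ← log_le_log_iff (by positivity) (by positivity), log_rpow hsub, log_pow,
    log_mul hadd.ne' hsub.ne', ← sub_nonneg]
  ring_nf

lemma one_sub_rpow_le_one_sub_sq_pow_of_le {q x y : ℝ} {n : ℕ} (hq : q ≤ n) (hx : 0 ≤ x)
    (hxy : x ≤ y) (hy : y < 1) (h : (1 - y) ^ q ≤ (1 - y ^ 2) ^ n) :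
    (1 - x) ^ q ≤ (1 - x ^ 2) ^ n := by
  have hy' : y ∈ Ioo (-1 : ℝ) 1 := ⟨by linarith, hy⟩
  rw [one_sub_rpow_le_one_sub_sq_pow_iff hy'] at h
  rw [one_sub_rpow_le_one_sub_sq_pow_iff ⟨by linarith, by linarith⟩]
  have hconcave := concaveOn_mul_log_one_add_add_mul_log_one_sub n.cast_nonneg (sub_nonneg.2 hq)
  have hmin := hconcave.min_le_of_mem_Icc (by norm_num) hy' ⟨hx, hxy⟩
  exact (le_min (by simp) h).trans hmin

lemma hasDerivAt_mul_one_sub_sq_pow_succ (n : ℕ) (x : ℝ) :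
    HasDerivAt (fun x : ℝ => x * (1 - x ^ 2) ^ (n + 1))
      ((1 - x ^ 2) ^ (n + 1) - 2 * (n + 1) * x ^ 2 * (1 - x ^ 2) ^ n) x := by
  have hsq : HasDerivAt (fun x : ℝ => 1 - x ^ 2) (-(2 * x)) x := by
    simpa using (hasDerivAt_pow 2 x).const_sub 1
  refine ((hasDerivAt_id' x).mul (hsq.fun_pow (n + 1))).congr_deriv ?_
  push_cast [Nat.add_sub_cancel]
  ring

lemma one_sub_iterate_le_rpow_pow {f : ℝ → ℝ} {s : Set ℝ} {r x : ℝ} (hmaps : MapsTo f s s)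
    (hs : s ⊆ Iic 1) (hr : 0 ≤ r) (hf : ∀ y ∈ s, 1 - f y ≤ (1 - y) ^ r) (hx : x ∈ s) (k : ℕ) :
    1 - f^[k] x ≤ (1 - x) ^ (r ^ k) := by
  induction k with
  | zero => simp
  | succ k ih =>
    have hk : f^[k] x ∈ s := hmaps.iterate k hx
    calc 1 - f^[k + 1] x = 1 - f (f^[k] x) := by rw [Function.iterate_succ_apply']
      _ ≤ (1 - f^[k] x) ^ r := hf _ hk
      _ ≤ ((1 - x) ^ r ^ k) ^ r := rpow_le_rpow (sub_nonneg.2 (hs hk)) ih hr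
      _ = (1 - x) ^ r ^ (k + 1) := by rw [← rpow_mul (sub_nonneg.2 (hs hx)), pow_succ]

/-- The coefficient `C(2n, n) / 4 ^ n` of `X ^ n` in the power series of `(1 - X) ^ (-1/2)`, written
in the shape in which it occurs in `g` and `p`. -/
noncomputable def invSqrtCoeff (n : ℕ) : ℝ := (1 / 4 ^ n : ℝ) * (Nat.choose (2 * n) n)

namespace invSqrtCoeff

lemma nonneg (n : ℕ) : 0 ≤ invSqrtCoeff n := by
  unfold invSqrtCoeff
  positivity

lemma le_one (n : ℕ) : invSqrtCoeff n ≤ 1 := by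
  have h : (n.centralBinom : ℝ) ≤ 4 ^ n := mod_cast n.centralBinom_le_four_pow
  rw [invSqrtCoeff, ← Nat.centralBinom_eq_two_mul_choose, one_div_mul_eq_div]
  exact div_le_one_of_le₀ h (by positivity)

lemma succ_mul_succ (n : ℕ) :
    2 * (n + 1) * invSqrtCoeff (n + 1) = (2 * n + 1) * invSqrtCoeff n := by
  have h : ((n : ℝ) + 1) * (n + 1).centralBinom = 2 * (2 * n + 1) * n.centralBinom :=
    mod_cast n.succ_mul_centralBinom_succ
  simp only [invSqrtCoeff, ← Nat.centralBinom_eq_two_mul_choose, pow_succ]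
  field_simp
  linear_combination 2 * h

end invSqrtCoeff

lemma p_zero : p 0 = 1 := by simp [p]

lemma p_succ (d : ℕ) : p (d + 1) = p d + invSqrtCoeff (d + 1) := Finset.sum_range_succ _ _

lemma p_eq_mul_invSqrtCoeff_succ (d : ℕ) : p d = 2 * (d + 1) * invSqrtCoeff (d + 1) := by
  induction d with
  | zero => norm_num [p_zero, invSqrtCoeff]
  | succ d ih =>
    rw [invSqrtCoeff.succ_mul_succ, p_succ, ih]
    push_cast
    ring

lemma one_le_p (d : ℕ) : 1 ≤ p d := by
  induction d with
  | zero => exact p_zero.ge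
  | succ d ih => linarith [p_succ d, invSqrtCoeff.nonneg (d + 1)]

lemma p_le_add_one (d : ℕ) : p d ≤ d + 1 := by
  induction d with
  | zero => simp [p_zero]
  | succ d ih =>
    push_cast
    linarith [p_succ d, invSqrtCoeff.le_one (d + 1)]

lemma g_apply_zero (d : ℕ) : g d 0 = 0 := by simp [g]

lemma g_apply_one (d : ℕ) : g d 1 = 1 := by simp [g, Finset.sum_range_succ']

lemma g_zero : g 0 = id := by
  ext x
  simp [g]

lemma g_succ (d : ℕ) :
    g (d + 1) = fun x => g d x + invSqrtCoeff (d + 1) * (x * (1 - x ^ 2) ^ (d + 1)) :=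
  funext fun _ => Finset.sum_range_succ _ _

lemma hasDerivAt_g (d : ℕ) (x : ℝ) : HasDerivAt (g d) (p d * (1 - x ^ 2) ^ d) x := by
  induction d with
  | zero => simpa [g_zero, p_zero] using hasDerivAt_id x
  | succ d ih =>
    rw [g_succ, p_succ]
    refine (ih.add <| (hasDerivAt_mul_one_sub_sq_pow_succ d x).const_mul
      (invSqrtCoeff (d + 1))).congr_deriv ?_
    rw [p_eq_mul_invSqrtCoeff_succ]
    ring

lemma continuous_g (d : ℕ) : Continuous (g d) :=
  continuous_iff_continuousAt.2 fun x => (hasDerivAt_g d x).continuousAt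

lemma monotoneOn_g (d : ℕ) : MonotoneOn (g d) (Icc (-1) 1) := by
  refine monotoneOn_of_hasDerivWithinAt_nonneg (convex_Icc _ _) (continuous_g d).continuousOn
    (fun x _ => (hasDerivAt_g d x).hasDerivWithinAt) fun x hx => ?_
  have hx' : 0 ≤ 1 - x ^ 2 := by
    rw [interior_Icc] at hx
    nlinarith [hx.1, hx.2]
  exact mul_nonneg (zero_le_one.trans (one_le_p d)) (pow_nonneg hx' d)

lemma mapsTo_g_Icc (d : ℕ) : MapsTo (g d) (Icc 0 1) (Icc 0 1) := by
  have hmono : MonotoneOn (g d) (Icc 0 1) :=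
    (monotoneOn_g d).mono (Icc_subset_Icc_left (by norm_num))
  simpa only [g_apply_zero, g_apply_one] using hmono.mapsTo_Icc

lemma one_sub_g_le_one_sub_rpow (d : ℕ) {m : ℝ} (hm : m ∈ Icc (0 : ℝ) 1) :
    1 - g d m ≤ (1 - m) ^ p d := by
  have hp : 0 < p d := zero_lt_one.trans_le (one_le_p d)
  let f : ℝ → ℝ := fun x => g d x + (1 - x) ^ p d
  let f' : ℝ → ℝ := fun x => p d * ((1 - x ^ 2) ^ d - (1 - x) ^ (p d - 1))
  have hderiv (x : ℝ) : HasDerivAt f (f' x) x := by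
    have hrpow := ((hasDerivAt_id' x).const_sub 1).rpow_const (Or.inr (one_le_p d))
    exact ((hasDerivAt_g d x).add hrpow).congr_deriv (by simp only [f']; ring)
  have hsign : ∀ x ∈ Ioo (0 : ℝ) 1, ∀ y ∈ Ioo (0 : ℝ) 1, x < y → 0 < f' y → 0 ≤ f' x := by
    intro x hx y hy hxy hfy
    have hy_le : (1 - y) ^ (p d - 1) ≤ (1 - y ^ 2) ^ d :=
      (sub_pos.1 (pos_of_mul_pos_right hfy hp.le)).le
    exact mul_nonneg hp.le <| sub_nonneg.2 <| one_sub_rpow_le_one_sub_sq_pow_of_le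
      (by linarith [p_le_add_one d]) hx.1.le hxy.le hy.2 hy_le
  have hmin : min (f 0) (f 1) ≤ f m := min_le_of_hasDerivAt_of_sign_change
    (fun x _ => (hderiv x).continuousAt.continuousWithinAt) (fun x _ => hderiv x) hsign hm
  have hf_zero : f 0 = 1 := by simp [f, g_apply_zero]
  have hf_one : f 1 = 1 := by simp [f, g_apply_one, zero_rpow hp.ne']
  rw [hf_zero, hf_one, min_self] at hmin
  exact sub_le_iff_le_add'.2 hmin

theorem stmt_6 (d : ℕ) (hd : 1 ≤ d) (k : ℕ) (m : ℝ) (hm : m ∈ Set.Icc (0 : ℝ) 1) :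
    0 ≤ 1 - (g d)^[k] m ∧ 1 - (g d)^[k] m ≤ (1 - m) ^ (p d ^ k) :=
  ⟨sub_nonneg.2 ((mapsTo_g_Icc d).iterate k hm).2,
    one_sub_iterate_le_rpow_pow (mapsTo_g_Icc d) Icc_subset_Iic_self
      (zero_le_one.trans (one_le_p d)) (fun _ => one_sub_g_le_one_sub_rpow d) hm k⟩
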